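/- Let I and J be finite index types and c : I → J a function. Let A_ww be an invertible I×I matrix over a field with A_ww i i' = 0 whenever c i ≠ c i', let A_wp be an I×J matrix with A_wp i j = 0 whenever c i ≠ j, and let A_pw be a J×I matrix with A_pw j i = 0 whenever c i ≠ j. Then A_pw·A_ww⁻¹·A_wp is a diagonal matrix; consequently, the statically condensed pressure block Ā_pp = A_pp − A_pw·A_ww⁻¹·A_wp has the same off-diagonal sparsity pattern as A_pப (the sparsity pattern of A_pp remains unchanged). -/

import Mathlib

open Matrix

/-!
A matrix whose rows and columns carry block labels vanishes outside equally labelled positions if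
and only if it intertwines the coordinate projections onto the blocks. Such matrices are therefore
stable under products and inverses. Labelling faces by their cell and cells by themselves, the
condensation term `A_pw * A_ww⁻¹ * A_wp` is of this kind with cell labels on both sides, that is,
diagonal.
-/

section BlockDiagonal

variable {l m n α R : Type*}

/-- A possibly rectangular matrix is block diagonal with respect to the labellings `r` of its rows
and `c` of its columns if its nonzero entries lie in rows and columns with the same label. With the
identity as one of the labellings, the labels are the rows or columns themselves. -/
def IsBlockDiagonal [Zero R] (r : m → α) (c : n → α) (M : Matrix m n R) : Prop :=
  ∀ ⦃i j⦄, r i ≠ c j → M i j = 0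

/-- The coordinate projection onto the block labelled `k`, as a diagonal matrix with entries
`0` and `1`; used to express block diagonality as a commutation relation. -/
def blockProjection (R : Type*) [Zero R] [One R] [DecidableEq m] [DecidableEq α]
    (b : m → α) (k : α) : Matrix m m R :=
  diagonal fun i => if b i = k then 1 else 0

theorem isBlockDiagonal_id_iff [Zero R] {M : Matrix m m R} :
    IsBlockDiagonal id id M ↔ M.IsDiag :=
  Iff.rfl

theorem IsBlockDiagonal.mul [NonUnitalNonAssocSemiring R] [Fintype m]
    {a : l → α} {b : m → α} {c : n → α} {M : Matrix l m R} {N : Matrix m n R}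
    (hM : IsBlockDiagonal a b M) (hN : IsBlockDiagonal b c N) :
    IsBlockDiagonal a c (M * N) := by
  intro i k hik
  rw [mul_apply]
  refine Finset.sum_eq_zero fun j _ => ?_
  by_cases hij : a i = b j
  · rw [hN (hij ▸ hik), mul_zero]
  · rw [hM hij, zero_mul]

theorem isBlockDiagonal_iff_blockProjection_mul_eq [NonAssocSemiring R] [Fintype m] [Fintype n]
    [DecidableEq m] [DecidableEq n] [DecidableEq α]
    {r : m → α} {c : n → α} {M : Matrix m n R} :
    IsBlockDiagonal r c M ↔ ∀ k, blockProjection R r k * M = M * blockProjection R c k := by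
  simp only [blockProjection, ← Matrix.ext_iff, diagonal_mul, mul_diagonal]
  constructor
  · intro hM k i j
    by_cases hij : r i = c j
    · simp [hij]
    · simp [hM hij]
  · intro hM i j hij
    simpa [hij.symm] using hM (r i) i j

theorem IsBlockDiagonal.of_mul_eq_one [Semiring R] [Fintype m] [Fintype n]
    [DecidableEq m] [DecidableEq n] {r : m → α} {c : n → α}
    {M : Matrix m n R} {N : Matrix n m R}
    (hM : IsBlockDiagonal r c M) (hMN : M * N = 1) (hNM : N * M = 1) :
    IsBlockDiagonal c r N := by
  classical
  rw [isBlockDiagonal_iff_blockProjection_mul_eq] at hM ⊢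
  intro k
  calc blockProjection R c k * N
      = N * (M * blockProjection R c k) * N := by rw [← Matrix.mul_assoc N, hNM, Matrix.one_mul]
    _ = N * (blockProjection R r k * M) * N := by rw [hM k]
    _ = N * blockProjection R r k := by simp only [Matrix.mul_assoc, hMN, Matrix.mul_one]

theorem IsBlockDiagonal.ringInverse [Semiring R] [Fintype m] [DecidableEq m]
    {r c : m → α} {M : Matrix m m R} (hM : IsBlockDiagonal r c M) (hunit : IsUnit M) :
    IsBlockDiagonal c r (Ring.inverse M) :=
  hM.of_mul_eq_one (Ring.mul_inverse_cancel M hunit) (Ring.inverse_mul_cancel M hunit)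

end BlockDiagonal

/-- The inverse is `Ring.inverse` because `A⁻¹` is only available for matrices over a commutative
ring, where the two agree. -/
theorem condensed_pressure_block_sparsity_general
    {R : Type*} [Ring R] {I J : Type*} [Fintype I] [DecidableEq I]
    (c : I → J)
    (A_ww : Matrix I I R) (hww : IsUnit A_ww)
    (hblock : ∀ i i', c i ≠ c i' → A_ww i i' = 0)
    (A_wp : Matrix I J R) (hwp : ∀ i j, c i ≠ j → A_wp i j = 0)
    (A_pw : Matrix J I R) (hpw : ∀ j i, c i ≠ j → A_pw j i = 0)
    (A_pp : Matrix J J R) :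
    (A_pw * Ring.inverse A_ww * A_wp).IsDiag ∧
      ∀ j j', j ≠ j' → (A_pp - A_pw * Ring.inverse A_ww * A_wp) j j' = A_pp j j' := by
  have ww_inv : IsBlockDiagonal c c (Ring.inverse A_ww) :=
    IsBlockDiagonal.ringInverse hblock hww
  have wp : IsBlockDiagonal c id A_wp := hwp
  have pw : IsBlockDiagonal id c A_pw := fun j i hji => hpw j i hji.symm
  have diag : (A_pw * Ring.inverse A_ww * A_wp).IsDiag :=
    isBlockDiagonal_id_iff.mp ((pw.mul ww_inv).mul wp)
  refine ⟨diag, fun j j' hjj' => ?_⟩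
  rw [Matrix.sub_apply, diag hjj', sub_zero]

/-- **Static condensation keeps the pressure sparsity pattern.**
If `A_ww` is invertible and block diagonal with respect to the cell map
`c : I → J`, and `A_wp`, `A_pw` have a nonzero at (one-sided face `i`,
cell `j`) only if `c i = j`, then `A_pw·A_ww⁻¹·A_wp` is a diagonal matrix;
consequently the statically condensed pressure block
`Ā_pp = A_pp − A_pw·A_ww⁻¹·A_wp` has the same off-diagonal entries as `A_pp`
(the sparsity pattern of `A_pp` remains unchanged). -/
theorem condensed_pressure_block_sparsity
    {K : Type*} [Field K] {I J : Type*} [Fintype I] [Fintype J] [DecidableEq I]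
    (c : I → J)
    (A_ww : Matrix I I K) (hww : IsUnit A_ww)
    (hblock : ∀ i i', c i ≠ c i' → A_ww i i' = 0)
    (A_wp : Matrix I J K) (hwp : ∀ i j, c i ≠ j → A_wp i j = 0)
    (A_pw : Matrix J I K) (hpw : ∀ j i, c i ≠ j → A_pw j i = 0)
    (A_pp : Matrix J J K) :
    (A_pw * A_ww⁻¹ * A_wp).IsDiag ∧
      ∀ j j', j ≠ j' → (A_pp - A_pw * A_ww⁻¹ * A_wp) j j' = A_pp j j' := by
  rw [nonsing_inv_eq_ringInverse]
  exact condensed_pressure_block_sparsity_general c A_ww hww hblock A_wp hwp A_pw hpw A_pp
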